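/- Let θ be a cylindric diagram in C_ω. For every standard tableau T ∈ LE(θ) and every n ≥ 1, the expression w_{θ,T}[n] = s(T⁻¹(1)) s(T⁻¹(2)) ⋯ s(T⁻¹(n)) is reduced; that is, the Coxeter length of this product in the affine Weyl group W equals n. -/

import Mathlib

/-!
The word `w[n]` is reduced because of a linear functional that every letter of every word changes
slowly, and that the letters of a tableau change as fast as possible.

A cylindric diagram has a boundary path `a : ℤ → ℤ`, recording the last cell on each diagonal. Its
steps `a (c - 1) - a c` are 0 or 1 and `κ`-periodic. Let `φ` be a functional on `h*` whose value on
`α_c` is the second difference of `a` at `c`. Precomposing `φ` with `s_i` swaps two adjacent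
entries of the periodic 0/1 sequence, so the functionals `φ ∘ w` all take values in `{-1, 0, 1}`
on simple roots (`Minuscule.comp`). With `ρ` such that `⟨ρ, α_i^∨⟩ = 1` for all `i`, one has
`(φ ∘ s_i) ρ = φ ρ - φ α_i`, so `|φ (w ρ) - φ ρ|` is at most the number of letters of any word
for `w` (`Minuscule.abs_wordProd_le`).

For the word of a tableau, `φ ∘ w[k]` corresponds to the diagram that remains after removing the
first `k` cells. The next cell is a minimal cell of that diagram, where the second difference is
`-1`, so each letter raises the value at `ρ` by exactly one (`tableau_invariant`). Hence
`φ (w[n] ρ) - φ ρ = n`, and every word for `w[n]` has at least `n` letters.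
-/

namespace CylPaper

/-! ## The cylinder and its order -/

abbrev Z2 : Type := ℤ × ℤ

/-- The partial order on ℤ²: (a,b) ≤ (c,d) iff a ≥ c and b ≥ d. -/
def le2 (x y : Z2) : Prop := y.1 ≤ x.1 ∧ y.2 ≤ x.2

/-- The period ω = (m, -ℓ). -/
def om (m l : ℕ) : Z2 := ((m : ℤ), -(l : ℤ))

/-- The cylinder C_ω = ℤ²/ℤω. -/
abbrev Cyl (m l : ℕ) : Type := Z2 ⧸ AddSubgroup.zmultiples (om m l)

/-- The natural projection π : ℤ² → C_ω. -/
def pr (m l : ℕ) : Z2 →+ Cyl m l := QuotientAddGroup.mk' _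

/-- The induced order relation on the cylinder: x ≤ y iff there are lifts with x̃ ≤ ỹ. -/
def cle (m l : ℕ) (x y : Cyl m l) : Prop :=
  ∃ a b : Z2, pr m l a = x ∧ pr m l b = y ∧ le2 a b

/-- A cylindric diagram: a non-trivial order filter of C_ω. -/
def IsCylindric (m l : ℕ) (θ : Set (Cyl m l)) : Prop :=
  θ.Nonempty ∧ θ ≠ Set.univ ∧ ∀ x ∈ θ, ∀ y, cle m l x y → y ∈ θ

/-- A periodic diagram of period ω: a non-trivial order filter of ℤ² with Θ + ω = Θ. -/
def IsPeriodic (m l : ℕ) (Θ : Set Z2) : Prop :=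
  Θ.Nonempty ∧ Θ ≠ Set.univ ∧ (∀ x ∈ Θ, ∀ y, le2 x y → y ∈ Θ) ∧
    (fun p => p + om m l) '' Θ = Θ

/-- A proper order ideal ξ of the sub-poset θ of C_ω. -/
def IsProperIdealOf (m l : ℕ) (θ ξ : Set (Cyl m l)) : Prop :=
  ξ ⊆ θ ∧ ξ ≠ θ ∧ ∀ x ∈ ξ, ∀ y ∈ θ, cle m l y x → y ∈ ξ

/-- A proper order ideal of the whole cylinder C_ω. -/
def IsProperIdealC (m l : ℕ) (J : Set (Cyl m l)) : Prop :=
  J ≠ Set.univ ∧ ∀ x ∈ J, ∀ y, cle m l y x → y ∈ J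

/-- A proper order filter of the whole cylinder C_ω. -/
def IsProperFilterC (m l : ℕ) (J : Set (Cyl m l)) : Prop :=
  J ≠ Set.univ ∧ ∀ x ∈ J, ∀ y, cle m l x y → y ∈ J

/-! ## The content map -/

/-- The content on ℤ²: (a,b) ↦ b - a mod κ (κ = m + ℓ). -/
def conHom (m l : ℕ) : Z2 →+ ZMod (m + l) where
  toFun p := ((p.2 - p.1 : ℤ) : ZMod (m + l))
  map_zero' := by simp
  map_add' a b := by
    simp only [Prod.fst_add, Prod.snd_add]
    push_cast
    ring

lemma conHom_om (m l : ℕ) : conHom m l (om m l) = 0 := by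
  have h : ((m + l : ℕ) : ZMod (m + l)) = 0 := ZMod.natCast_self _
  show ((((om m l).2 - (om m l).1 : ℤ)) : ZMod (m + l)) = 0
  simp only [om]
  push_cast at h ⊢
  linear_combination -h

/-- The content map con : C_ω → ℤ/κℤ. -/
def con (m l : ℕ) : Cyl m l →+ ZMod (m + l) :=
  QuotientAddGroup.lift _ (conHom m l) (by
    intro x hx
    obtain ⟨k, rfl⟩ := AddSubgroup.mem_zmultiples_iff.mp hx
    simp only [AddMonoidHom.mem_ker, map_zsmul, conHom_om, smul_zero])

/-! ## The affine root system of type A_{κ-1}^{(1)} -/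

/-- h*, with coordinates in the basis {α_i (i ∈ ℤ/κℤ), Λ₀}:
`(c, t)` stands for `Σ_i c_i α_i + t Λ₀`. -/
abbrev Hw (κ : ℕ) : Type := (ZMod κ → ℚ) × ℚ

/-- The affine Cartan matrix of type A_{κ-1}^{(1)} (valid for κ ≥ 2). -/
def cartan (κ : ℕ) (i j : ZMod κ) : ℚ :=
  (if i = j then 2 else 0) + (if i - j = 1 then -1 else 0) + (if i - j = -1 then -1 else 0)

/-- The simple root α_i. -/
def alphaR (κ : ℕ) (i : ZMod κ) : Hw κ := (Pi.single i 1, 0)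

/-- The null root δ = Σ_i α_i. -/
def deltaR (κ : ℕ) : Hw κ := (fun _ => 1, 0)

/-- The pairing ⟨ζ, α_i^∨⟩. -/
noncomputable def pairSimple (κ : ℕ) (ζ : Hw κ) (i : ZMod κ) : ℚ :=
  (∑ᶠ j, ζ.1 j * cartan κ i j) + ζ.2 * (if i = 0 then 1 else 0)

/-- The pairing ⟨ζ, β^∨⟩ where β = Σ_i k_i α_i lies in the root lattice,
so β^∨ = Σ_i k_i α_i^∨. -/
noncomputable def pairCo (κ : ℕ) (ζ β : Hw κ) : ℚ := ∑ᶠ i, β.1 i * pairSimple κ ζ i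

/-- The simple reflection s_i : ζ ↦ ζ - ⟨ζ, α_i^∨⟩ α_i, as a map on h*. -/
noncomputable def sFun (κ : ℕ) (i : ZMod κ) (ζ : Hw κ) : Hw κ :=
  ζ - pairSimple κ ζ i • alphaR κ i

/-- The element s_{i₁} s_{i₂} ⋯ s_{i_r} of the affine Weyl group
given by a word [i₁, i₂, …, i_r]. -/
noncomputable def wordProd (κ : ℕ) (L : List (ZMod κ)) : Hw κ → Hw κ :=
  (L.map (sFun κ)).foldr (· ∘ ·) id

/-- Membership in the affine Weyl group W (generated by the s_i). -/
def Wmem (κ : ℕ) (w : Hw κ → Hw κ) : Prop := ∃ L : List (ZMod κ), wordProd κ L = w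

/-- The Coxeter length: the least r such that w is a product of r simple reflections. -/
noncomputable def len (κ : ℕ) (w : Hw κ → Hw κ) : ℕ :=
  sInf {r : ℕ | ∃ L : List (ZMod κ), L.length = r ∧ wordProd κ L = w}

/-- Q₊ = Σ_i ℤ≥0 α_i. -/
def QPos (κ : ℕ) : Set (Hw κ) := {x | x.2 = 0 ∧ ∀ i, ∃ n : ℕ, x.1 i = (n : ℚ)}

/-- The set R = WΠ of real roots. -/
def Rset (κ : ℕ) : Set (Hw κ) :=
  {β | ∃ (L : List (ZMod κ)) (i : ZMod κ), β = wordProd κ L (alphaR κ i)}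

/-- Positive real roots R₊ = R ∩ Q₊. -/
def Rpos (κ : ℕ) : Set (Hw κ) := Rset κ ∩ QPos κ

/-- Negative real roots R₋ = -R₊. -/
def Rneg (κ : ℕ) : Set (Hw κ) := {β | -β ∈ Rpos κ}

/-- The inversion set R(w) = R₊ ∩ w R₋. -/
def invSet (κ : ℕ) (w : Hw κ → Hw κ) : Set (Hw κ) := Rpos κ ∩ (w '' Rneg κ)

/-- The weak right Bruhat order on W. -/
def wble (κ : ℕ) (v w : Hw κ → Hw κ) : Prop :=
  Relation.ReflTransGen
    (fun u u' => ∃ i : ZMod κ, u' = u ∘ sFun κ i ∧ len κ u' = len κ u + 1) v w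

/-- The weak Bruhat interval [e, w]. -/
def bint (κ : ℕ) (w : Hw κ → Hw κ) : Set (Hw κ → Hw κ) :=
  {x | wble κ id x ∧ wble κ x w}

/-- A single commutation move on words: swap adjacent letters i, j with i - j ≠ 0, ±1. -/
def CommMove (κ : ℕ) (L1 L2 : List (ZMod κ)) : Prop :=
  ∃ (u v : List (ZMod κ)) (i j : ZMod κ),
    i - j ≠ 0 ∧ i - j ≠ 1 ∧ i - j ≠ -1 ∧
    L1 = u ++ i :: j :: v ∧ L2 = u ++ j :: i :: v

/-- A word is reduced if its length equals the Coxeter length of its product. -/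
def IsReducedWord (κ : ℕ) (L : List (ZMod κ)) : Prop :=
  len κ (wordProd κ L) = L.length

/-- Fully commutative: any reduced word for w can be obtained from any other
using only commutation moves. -/
def FullyComm (κ : ℕ) (w : Hw κ → Hw κ) : Prop :=
  ∀ L1 L2 : List (ZMod κ),
    IsReducedWord κ L1 → wordProd κ L1 = w →
    IsReducedWord κ L2 → wordProd κ L2 = w →
    Relation.ReflTransGen (CommMove κ) L1 L2

/-! ## Hooks, bottom set and weights attached to a cylindric diagram -/

/-- α(x) = α_{con(x)}. -/
def alC (m l : ℕ) (x : Cyl m l) : Hw (m + l) := alphaR (m + l) (con m l x)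

/-- arm(x) = {x + π(0,k) : k ≥ 1} ∩ θ. -/
def armSet (m l : ℕ) (θ : Set (Cyl m l)) (x : Cyl m l) : Set (Cyl m l) :=
  {y | y ∈ θ ∧ ∃ k : ℕ, 1 ≤ k ∧ y = x + pr m l (0, (k : ℤ))}

/-- leg(x) = {x + π(k,0) : k ≥ 1} ∩ θ. -/
def legSet (m l : ℕ) (θ : Set (Cyl m l)) (x : Cyl m l) : Set (Cyl m l) :=
  {y | y ∈ θ ∧ ∃ k : ℕ, 1 ≤ k ∧ y = x + pr m l ((k : ℤ), 0)}

/-- The colored hook length hk(x) = α(x) + Σ_{y∈arm(x)} α(y) + Σ_{y∈leg(x)} α(y). -/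
noncomputable def hk (m l : ℕ) (θ : Set (Cyl m l)) (x : Cyl m l) : Hw (m + l) :=
  alC m l x + (∑ᶠ y ∈ armSet m l θ x, alC m l y) + (∑ᶠ y ∈ legSet m l θ x, alC m l y)

/-- x is the minimum cell b_i of content i in θ. -/
def IsBottomCell (m l : ℕ) (θ : Set (Cyl m l)) (i : ZMod (m + l)) (x : Cyl m l) : Prop :=
  x ∈ θ ∧ con m l x = i ∧ ∀ y ∈ θ, con m l y = i → cle m l x y

/-- The bottom set Γ = {b_i : i ∈ ℤ/κℤ}. -/
def btm (m l : ℕ) (θ : Set (Cyl m l)) : Set (Cyl m l) :=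
  {x | ∃ i, IsBottomCell m l θ i x}

/-- The maximal elements Γ_max of the bottom set. -/
def btmMax (m l : ℕ) (θ : Set (Cyl m l)) : Set (Cyl m l) :=
  {x | x ∈ btm m l θ ∧ ∀ y ∈ btm m l θ, cle m l x y → y = x}

/-- The minimal elements Γ_min of the bottom set. -/
def btmMin (m l : ℕ) (θ : Set (Cyl m l)) : Set (Cyl m l) :=
  {x | x ∈ btm m l θ ∧ ∀ y ∈ btm m l θ, cle m l y x → y = x}

open Classical in
/-- The coefficient a_i of Λ_i in the predominant weight P_θ:
1 if b_i ∈ Γ_max, -1 if b_i ∈ Γ_min, 0 otherwise. -/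
noncomputable def aC (m l : ℕ) (θ : Set (Cyl m l)) (i : ZMod (m + l)) : ℚ :=
  if ∃ x, IsBottomCell m l θ i x ∧ x ∈ btmMax m l θ then 1
  else if ∃ x, IsBottomCell m l θ i x ∧ x ∈ btmMin m l θ then -1 else 0

/-- The pairing ⟨P_θ, β^∨⟩ = Σ_i a_i k_i for β = Σ_i k_i α_i,
where P_θ = Σ_i a_i Λ_i (since ⟨Λ_i, α_j^∨⟩ = δ_{ij} and ⟨Λ_i, d⟩ = 0). -/
noncomputable def pairP (m l : ℕ) (θ : Set (Cyl m l)) (β : Hw (m + l)) : ℚ :=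
  ∑ᶠ i, aC m l θ i * β.1 i

/-- D(P_θ) = {α ∈ R₊ : ⟨P_θ, α^∨⟩ = -1}. -/
def DSet (m l : ℕ) (θ : Set (Cyl m l)) : Set (Hw (m + l)) :=
  {β | β ∈ Rpos (m + l) ∧ pairP m l θ β = -1}

/-- The "inversion set" R(w_θ) = {hk(x) : x ∈ θ}. -/
def RwTheta (m l : ℕ) (θ : Set (Cyl m l)) : Set (Hw (m + l)) := hk m l θ '' θ

/-- The set Π_θ = Π_θ^0 ∪ Π_θ^arm ∪ Π_θ^leg. -/
def PiTheta (m l : ℕ) (θ : Set (Cyl m l)) : Set (Hw (m + l)) :=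
  {v | ∃ x, x ∈ btm m l θ ∧ x ∉ btmMax m l θ ∧ x ∉ btmMin m l θ ∧ v = alC m l x} ∪
  {v | ∃ x, x ∈ btmMax m l θ ∧ v = alC m l x + ∑ᶠ y ∈ armSet m l θ x, alC m l y} ∪
  {v | ∃ x, x ∈ btmMax m l θ ∧ v = alC m l x + ∑ᶠ y ∈ legSet m l θ x, alC m l y}

/-- The modified order ⊴ on R(w_θ): α ⊴ β iff β - α ∈ Σ_{γ∈Π_θ} ℤ≥0 γ. -/
def trile (m l : ℕ) (θ : Set (Cyl m l)) (α β : Hw (m + l)) : Prop :=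
  β - α ∈ AddSubmonoid.closure (PiTheta m l θ)

/-! ## Standard tableaux (encoded by the inverse enumeration e = T⁻¹ : ℤ≥1 → θ) -/

/-- A standard tableau on θ, given by the enumeration e = T⁻¹ : {1,2,…} → θ.
This is precisely the data of an order-preserving bijection T : θ → ℤ≥1. -/
def IsTableau (m l : ℕ) (θ : Set (Cyl m l)) (e : ℕ → Cyl m l) : Prop :=
  Set.InjOn e {a : ℕ | 1 ≤ a} ∧ e '' {a : ℕ | 1 ≤ a} = θ ∧
  ∀ a b : ℕ, 1 ≤ a → 1 ≤ b → cle m l (e a) (e b) → e a ≠ e b → a < b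

/-- A standard tableau on a finite (skew) diagram ξ with |ξ| = n, encoded by
the enumeration e = S⁻¹ : {1,…,n} → ξ. -/
def IsTableauOn (m l : ℕ) (ξ : Set (Cyl m l)) (n : ℕ) (e : ℕ → Cyl m l) : Prop :=
  Set.InjOn e (Set.Icc 1 n) ∧ e '' Set.Icc 1 n = ξ ∧
  ∀ a b : ℕ, a ∈ Set.Icc 1 n → b ∈ Set.Icc 1 n → cle m l (e a) (e b) → e a ≠ e b → a < b

/-- The word (con(e 1), con(e 2), …, con(e n)). -/
def tabWord (m l : ℕ) (e : ℕ → Cyl m l) (n : ℕ) : List (ZMod (m + l)) :=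
  (List.range n).map (fun k => con m l (e (k + 1)))

/-- The semi-infinite Bruhat interval [e, w_{θ,T}) = ⋃_{n≥1} [e, w_{θ,T}[n]]. -/
def semiInt (m l : ℕ) (e : ℕ → Cyl m l) : Set (Hw (m + l) → Hw (m + l)) :=
  ⋃ n ∈ {n : ℕ | 1 ≤ n}, bint (m + l) (wordProd (m + l) (tabWord m l e n))

/-- w is P_θ-pluscule: ⟨P_θ, α^∨⟩ = -1 for every α ∈ R(w). -/
def Pluscule (m l : ℕ) (θ : Set (Cyl m l)) (w : Hw (m + l) → Hw (m + l)) : Prop :=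
  ∀ β ∈ invSet (m + l) w, pairP m l θ β = -1

/-- The generating relation of the heap order ⪯_T on ℤ≥1. -/
def heapRel (m l : ℕ) (e : ℕ → Cyl m l) (a b : ℕ) : Prop :=
  1 ≤ a ∧ a ≤ b ∧
    (con m l (e a) = con m l (e b) ∨
      sFun (m + l) (con m l (e a)) ∘ sFun (m + l) (con m l (e b)) ≠
        sFun (m + l) (con m l (e b)) ∘ sFun (m + l) (con m l (e a)))

/-- The generating relation of the heap order ≤^hp on R(w_θ):
α ≤ β whenever β - α ∈ Q₊ (the ordinary order) and ⟨α, β^∨⟩ ≠ 0. -/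
def hpRel (m l : ℕ) (θ : Set (Cyl m l)) (α β : Hw (m + l)) : Prop :=
  α ∈ RwTheta m l θ ∧ β ∈ RwTheta m l θ ∧ β - α ∈ QPos (m + l) ∧
    pairCo (m + l) α β ≠ 0

/-- v is the Weyl group element w_ξ of a proper order ideal ξ of θ. -/
def IsIdealWord (m l : ℕ) (θ ξ : Set (Cyl m l)) (v : Hw (m + l) → Hw (m + l)) : Prop :=
  IsProperIdealOf m l θ ξ ∧
    ∃ n e, IsTableauOn m l ξ n e ∧ v = wordProd (m + l) (tabWord m l e n)

/-- A proper order ideal of the poset (R(w_θ), ⊴). -/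
def IsProperIdealOfRw (m l : ℕ) (θ : Set (Cyl m l)) (J : Set (Hw (m + l))) : Prop :=
  J ⊆ RwTheta m l θ ∧ J ≠ RwTheta m l θ ∧
    ∀ β ∈ J, ∀ α ∈ RwTheta m l θ, trile m l θ α β → α ∈ J


/-! ### Linearity of the reflections and the Weyl vector -/

section Reduced

variable {κ : ℕ}

lemma cartan_eq (i j : ZMod κ) :
    cartan κ i j = 2 * (if j = i then 1 else 0) - (if j = i - 1 then 1 else 0)
      - (if j = i + 1 then 1 else 0) := by
  have h1 : (i = j) ↔ (j = i) := eq_comm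
  have h2 : (i - j = 1) ↔ (j = i - 1) := by
    constructor <;> intro h <;> linear_combination -h
  have h3 : (i - j = -1) ↔ (j = i + 1) := by
    constructor <;> intro h <;> linear_combination -h
  simp only [cartan, h1, h2, h3]
  split_ifs <;> norm_num

lemma pairSimple_eq [NeZero κ] (ζ : Hw κ) (i : ZMod κ) :
    pairSimple κ ζ i = 2 * ζ.1 i - ζ.1 (i - 1) - ζ.1 (i + 1)
      + ζ.2 * (if i = 0 then 1 else 0) := by
  unfold pairSimple
  rw [finsum_eq_sum_of_fintype]
  simp only [cartan_eq, mul_sub, Finset.sum_sub_distrib]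
  have : ∀ j, ζ.1 j * (2 * (if j = i then (1 : ℚ) else 0)) =
      2 * (ζ.1 j * (if j = i then (1 : ℚ) else 0)) := fun j => by ring
  simp only [this, ← Finset.mul_sum]
  simp

lemma pairSimple_alphaR [NeZero κ] (i j : ZMod κ) :
    pairSimple κ (alphaR κ j) i = cartan κ i j := by
  unfold pairSimple
  rw [finsum_eq_sum_of_fintype]
  simp [alphaR, Pi.single_apply]

/-- The simple reflection as a linear map. -/
noncomputable def sLin (κ : ℕ) [NeZero κ] (i : ZMod κ) : Hw κ →ₗ[ℚ] Hw κ where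
  toFun := sFun κ i
  map_add' x y := by
    have : pairSimple κ (x + y) i = pairSimple κ x i + pairSimple κ y i := by
      simp only [pairSimple_eq, Prod.fst_add, Prod.snd_add, Pi.add_apply]; ring
    simp only [sFun, this, add_smul]; abel
  map_smul' c x := by
    have : pairSimple κ (c • x) i = c * pairSimple κ x i := by
      simp only [pairSimple_eq, Prod.smul_fst, Prod.smul_snd, Pi.smul_apply, smul_eq_mul]; ring
    simp only [sFun, this, RingHom.id_apply, smul_sub, mul_smul]

lemma sLin_apply [NeZero κ] (i : ZMod κ) (ζ : Hw κ) : sLin κ i ζ = sFun κ i ζ := rfl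

lemma wordProd_cons (i : ZMod κ) (L : List (ZMod κ)) (ζ : Hw κ) :
    wordProd κ (i :: L) ζ = sFun κ i (wordProd κ L ζ) := rfl

lemma wordProd_append (L M : List (ZMod κ)) (ζ : Hw κ) :
    wordProd κ (L ++ M) ζ = wordProd κ L (wordProd κ M ζ) := by
  induction L with
  | nil => rfl
  | cons i L ih => rw [List.cons_append, wordProd_cons, wordProd_cons, ih]

lemma exists_linear_wordProd [NeZero κ] (L : List (ZMod κ)) :
    ∃ f : Hw κ →ₗ[ℚ] Hw κ, ∀ ζ, f ζ = wordProd κ L ζ := by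
  induction L with
  | nil => exact ⟨LinearMap.id, fun _ => rfl⟩
  | cons i L ih =>
    obtain ⟨f, hf⟩ := ih
    exact ⟨sLin κ i ∘ₗ f, fun ζ => by rw [LinearMap.comp_apply, hf, sLin_apply, wordProd_cons]⟩

lemma functional_sFun (φ : Hw κ →ₗ[ℚ] ℚ) (i : ZMod κ) (ζ : Hw κ) :
    φ (sFun κ i ζ) = φ ζ - pairSimple κ ζ i * φ (alphaR κ i) := by
  simp [sFun]

/-- A Weyl vector: `⟨ρ, α_i^∨⟩ = 1` for every `i`. Its coordinate at `α_v` is `v (κ - v) / 2`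
for `0 ≤ v < κ`, and its coordinate at `Λ₀` is `κ`. -/
def rhoR (κ : ℕ) : Hw κ := (fun j => (j.val : ℚ) * (κ - j.val) / 2, κ)

/-- The formula for the coordinates of `ρ` also holds at the endpoint `κ`, where it gives `0`. -/
lemma rhoR_natCast [NeZero κ] (v : ℕ) (hv : v ≤ κ) :
    (rhoR κ).1 (v : ZMod κ) = (v : ℚ) * (κ - v) / 2 := by
  rcases hv.lt_or_eq with h | rfl
  · simp only [rhoR, ZMod.val_natCast_of_lt h]
  · simp [rhoR]

lemma pairSimple_rhoR [NeZero κ] (i : ZMod κ) : pairSimple κ (rhoR κ) i = 1 := by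
  rw [pairSimple_eq]
  have hκ : 1 ≤ κ := NeZero.one_le
  by_cases hi : i = 0
  · subst hi
    have h0 := rhoR_natCast (κ := κ) 0 (by omega)
    have h1 := rhoR_natCast (κ := κ) 1 (by omega)
    have h2 := rhoR_natCast (κ := κ) (κ - 1) (by omega)
    rw [Nat.cast_sub hκ, Nat.cast_sub hκ, ZMod.natCast_self] at h2
    simp only [Nat.cast_zero, Nat.cast_one] at h0 h1 h2
    rw [h0, h2, zero_add, h1]
    simp only [rhoR, if_true]
    ring
  · have hv : i.val < κ := ZMod.val_lt i
    have hpos : 1 ≤ i.val := Nat.one_le_iff_ne_zero.mpr (by rwa [Ne, ZMod.val_eq_zero])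
    have hc : ((i.val : ℕ) : ZMod κ) = i := ZMod.natCast_zmod_val i
    have h0 := rhoR_natCast (κ := κ) i.val (by omega)
    have h1 := rhoR_natCast (κ := κ) (i.val + 1) (by omega)
    have h2 := rhoR_natCast (κ := κ) (i.val - 1) (by omega)
    rw [Nat.cast_sub hpos, Nat.cast_sub hpos, hc] at h2
    rw [Nat.cast_add, Nat.cast_add, hc] at h1
    rw [hc] at h0
    simp only [Nat.cast_one] at h1 h2
    rw [h0, h1, h2, if_neg hi]
    ring

/-! ### Functionals given by periodic 0/1 sequences -/

/-- `φ` is minuscule if its values on the simple roots are the successive differences of a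
`κ`-periodic sequence of zeros and ones (the step sequence of the boundary path of a
cylindric diagram). -/
def Minuscule (φ : Hw κ →ₗ[ℚ] ℚ) : Prop :=
  ∃ ε : ZMod κ → ℚ, (∀ j, ε j = 0 ∨ ε j = 1) ∧ ∀ j, φ (alphaR κ j) = ε j - ε (j + 1)

lemma Minuscule.abs_le_one {φ : Hw κ →ₗ[ℚ] ℚ} (h : Minuscule φ) (i : ZMod κ) :
    |φ (alphaR κ i)| ≤ 1 := by
  obtain ⟨ε, h01, hφ⟩ := h
  rw [hφ]
  rcases h01 i with h | h <;> rcases h01 (i + 1) with h' | h' <;> rw [h, h'] <;> norm_num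

/-- Composing with `s_i` swaps the entries at `i` and `i + 1` of the 0/1 sequence. -/
lemma Minuscule.comp [NeZero κ] (hκ : 2 ≤ κ) {φ : Hw κ →ₗ[ℚ] ℚ} (h : Minuscule φ) (i : ZMod κ) :
    Minuscule (φ ∘ₗ sLin κ i) := by
  obtain ⟨ε, h01, hφ⟩ := h
  have : Fact (1 < κ) := ⟨hκ⟩
  have hne : i ≠ i + 1 := by simp
  -- the swapped sequence, written so that the differences below are linear in the indicators
  refine ⟨fun j => ε j - ((if j = i then 1 else 0) - (if j = i + 1 then 1 else 0))
    * (ε i - ε (i + 1)), ?_, ?_⟩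
  · intro j
    by_cases h1 : j = i
    · subst h1
      simpa [hne] using h01 (j + 1)
    · by_cases h2 : j = i + 1
      · subst h2
        simpa [hne.symm] using h01 i
      · simpa [h1, h2] using h01 j
  · intro j
    rw [LinearMap.comp_apply, sLin_apply, functional_sFun, pairSimple_alphaR, cartan_eq, hφ, hφ]
    have e1 : (j + 1 = i) ↔ (j = i - 1) := by
      constructor <;> intro h <;> linear_combination h
    have e2 : (j + 1 = i + 1) ↔ (j = i) := by simp
    simp only [e1, e2]
    ring

/-- Each letter of a word changes the value of a minuscule functional at `ρ` by at most one. -/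
lemma Minuscule.abs_wordProd_le [NeZero κ] (hκ : 2 ≤ κ) (L : List (ZMod κ)) :
    ∀ {φ : Hw κ →ₗ[ℚ] ℚ}, Minuscule φ →
      |φ (wordProd κ L (rhoR κ)) - φ (rhoR κ)| ≤ L.length := by
  induction L with
  | nil => intro φ _; simp [wordProd]
  | cons i L ih =>
    intro φ h
    have h1 := ih (h.comp hκ i)
    simp only [LinearMap.comp_apply, sLin_apply] at h1
    rw [functional_sFun φ i (rhoR κ), pairSimple_rhoR, one_mul] at h1
    have h2 := h.abs_le_one i
    rw [wordProd_cons, List.length_cons]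
    push_cast
    rw [abs_le] at *
    constructor <;> linarith [h1.1, h1.2, h2.1, h2.2]

end Reduced

/-! ### Boundary paths of cylindric diagrams -/

section Boundary

variable {m l : ℕ}

lemma pr_eq_iff (x y p q : ℤ) :
    pr m l (x, y) = pr m l (p, q) ↔ ∃ t : ℤ, p = x + t * m ∧ q = y - t * l := by
  have h : pr m l (x, y) = pr m l (p, q) ↔
      -(x, y) + (p, q) ∈ AddSubgroup.zmultiples (om m l) := QuotientAddGroup.eq
  rw [h, AddSubgroup.mem_zmultiples_iff]
  constructor
  · rintro ⟨t, ht⟩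
    have h1 := congrArg Prod.fst ht
    have h2 := congrArg Prod.snd ht
    simp [om] at h1 h2
    exact ⟨t, by linarith, by linarith⟩
  · rintro ⟨t, h1, h2⟩
    refine ⟨t, ?_⟩
    ext
    · simp [om, h1]
    · simp [om, h2]; ring

lemma con_pr (x y : ℤ) : con m l (pr m l (x, y)) = ((y - x : ℤ) : ZMod (m + l)) := rfl

lemma exists_pr (z : Cyl m l) : ∃ x y : ℤ, z = pr m l (x, y) := by
  obtain ⟨⟨x, y⟩, h⟩ := QuotientAddGroup.mk_surjective z
  exact ⟨x, y, h.symm⟩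

lemma cle_pr {x y p q : ℤ} (h1 : p ≤ x) (h2 : q ≤ y) :
    cle m l (pr m l (x, y)) (pr m l (p, q)) := ⟨_, _, rfl, rfl, h1, h2⟩

/-- `a` is the boundary path of `S`: on the diagonal `y - x = c` of `ℤ²`, the cells lying over `S`
are those with first coordinate at most `a c`. -/
def IsBoundary (S : Set (Cyl m l)) (a : ℤ → ℤ) : Prop :=
  ∀ x y : ℤ, pr m l (x, y) ∈ S ↔ x ≤ a (y - x)

lemma exists_boundary {θ : Set (Cyl m l)} (hθ : IsCylindric m l θ) : ∃ a, IsBoundary θ a := by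
  obtain ⟨⟨z, hz⟩, hne, hup⟩ := hθ
  obtain ⟨z', hz'⟩ := (Set.ne_univ_iff_exists_notMem θ).mp hne
  obtain ⟨u, v, rfl⟩ := exists_pr z
  obtain ⟨u', v', rfl⟩ := exists_pr z'
  have key : ∀ c : ℤ, ∃ A : ℤ, pr m l (A, A + c) ∈ θ ∧ ∀ x, pr m l (x, x + c) ∈ θ → x ≤ A := by
    intro c
    refine Int.exists_greatest_of_bdd (P := fun x => pr m l (x, x + c) ∈ θ) ⟨max u' (v' - c), ?_⟩
      ⟨min u (v - c), ?_⟩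
    · intro x hx
      by_contra! hlt
      exact hz' (hup _ hx _ (cle_pr (by omega) (by omega)))
    · exact hup _ hz _ (cle_pr (by omega) (by omega))
  choose a ha hmax using key
  refine ⟨a, fun x y => ⟨fun h => hmax _ _ (by rwa [add_sub_cancel]), fun h => ?_⟩⟩
  exact hup _ (ha (y - x)) _ (cle_pr h (by omega))

variable {S : Set (Cyl m l)} {a : ℤ → ℤ}

lemma IsBoundary.shift (h : IsBoundary S a) (c t : ℤ) :
    a (c - t * (m + l)) = a c + t * m := by
  have key : ∀ x, x ≤ a c ↔ x + t * m ≤ a (c - t * (m + l)) := by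
    intro x
    have h1 := h x (x + c)
    have h2 := h (x + t * m) (x + c - t * l)
    rw [← (pr_eq_iff x (x + c) _ _).mpr ⟨t, rfl, rfl⟩, h1] at h2
    convert h2 using 3 <;> ring_nf
  have h1 := (key (a c)).mp le_rfl
  have h2 := (key (a (c - t * (m + l)) - t * m)).mpr (by linarith)
  linarith

lemma IsBoundary.step (h : IsBoundary S a) (hup : ∀ x ∈ S, ∀ y, cle m l x y → y ∈ S) (c : ℤ) :
    a (c + 1) = a c ∨ a (c + 1) = a c - 1 := by
  have h1 : pr m l (a c, a c + c) ∈ S := (h _ _).mpr (by rw [add_sub_cancel_left])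
  have h2 : pr m l (a (c + 1), a (c + 1) + (c + 1)) ∈ S :=
    (h _ _).mpr (by rw [add_sub_cancel_left])
  have h3 := hup _ h1 (pr m l (a c - 1, a c + c)) (cle_pr (by omega) le_rfl)
  have h4 := hup _ h2 (pr m l (a (c + 1), a (c + 1) + c)) (cle_pr le_rfl (by omega))
  rw [h, show a c + c - (a c - 1) = c + 1 by ring] at h3
  rw [h, add_sub_cancel_left] at h4
  omega

/-- The steps of a boundary path are periodic, hence indexed by `ℤ/κℤ`. -/
lemma IsBoundary.periodic (h : IsBoundary S a) (c d : ℤ)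
    (hcd : (c : ZMod (m + l)) = (d : ZMod (m + l))) : a (c - 1) - a c = a (d - 1) - a d := by
  rw [ZMod.intCast_eq_intCast_iff_dvd_sub] at hcd
  obtain ⟨t, ht⟩ := hcd
  push_cast at ht
  have h1 := h.shift d t
  have h2 := h.shift (d - 1) t
  rw [show d - t * (m + l : ℤ) = c by linear_combination ht] at h1
  rw [show d - 1 - t * (m + l : ℤ) = c - 1 by linear_combination ht] at h2
  omega

/-- Removing the last cell of a diagonal of content `i` lowers the path by one on all diagonals
of content `i`. -/
lemma IsBoundary.remove (h : IsBoundary S a) (i : ℤ) :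
    IsBoundary (S \ {pr m l (a i, a i + i)})
      (fun c => a c - if (c : ZMod (m + l)) = (i : ZMod (m + l)) then 1 else 0) := by
  intro x y
  rw [Set.mem_sdiff, h, Set.mem_singleton_iff, pr_eq_iff]
  beta_reduce
  split_ifs with hc
  · rw [ZMod.intCast_eq_intCast_iff_dvd_sub] at hc
    obtain ⟨t, ht⟩ := hc
    push_cast at ht
    have h1 := h.shift i t
    rw [show i - t * (m + l : ℤ) = y - x by linear_combination ht] at h1
    constructor
    · rintro ⟨hle, hno⟩
      rcases hle.lt_or_eq with hlt | heq
      · omega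
      · refine absurd ⟨-t, ?_, ?_⟩ hno
        · linarith
        · linear_combination ht - h1 - heq
    · intro hle
      refine ⟨by omega, ?_⟩
      rintro ⟨u, e1, e2⟩
      -- comparing contents gives `u = -t`, unless `κ = 0`, in which case `m = 0`
      have e3 : (t + u) * ((m : ℤ) + l) = 0 := by linear_combination e2 - e1 - ht
      rcases mul_eq_zero.mp e3 with h0 | h0
      · have : u = -t := by omega
        subst this
        linarith
      · have : (m : ℤ) = 0 := by omega
        simp only [this, mul_zero] at *
        omega
  · rw [sub_zero]
    refine and_iff_left ?_
    rintro ⟨t, e1, e2⟩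
    apply hc
    rw [ZMod.intCast_eq_intCast_iff_dvd_sub]
    exact ⟨-t, by push_cast; linear_combination e2 - e1⟩

/-- A removable corner of the diagram sits where the second difference of the path is `-1`. -/
lemma IsBoundary.corner (h : IsBoundary S a) (hup : ∀ x ∈ S, ∀ y, cle m l x y → y ∈ S) {p q : ℤ}
    (h0 : pr m l (p, q) ∈ S) (h1 : pr m l (p + 1, q) ∉ S) (h2 : pr m l (p, q + 1) ∉ S) :
    a (q - p) = p ∧ a (q - p - 1) - 2 * a (q - p) + a (q - p + 1) = -1 := by
  rw [h] at h0 h1 h2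
  rw [show q - (p + 1) = q - p - 1 by ring] at h1
  rw [show q + 1 - p = q - p + 1 by ring] at h2
  have s1 := h.step hup (q - p)
  have s2 := h.step hup (q - p - 1)
  rw [sub_add_cancel] at s2
  omega

end Boundary

/-! ### Tableaux -/

section Tableau

variable {m l : ℕ} {θ : Set (Cyl m l)} {e : ℕ → Cyl m l}

/-- The cells of `θ` that remain after removing `e 1, …, e k`. -/
def remaining (e : ℕ → Cyl m l) (k : ℕ) : Set (Cyl m l) := {z | ∃ j, k < j ∧ e j = z}

lemma remaining_zero (he : IsTableau m l θ e) : remaining e 0 = θ := by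
  rw [← he.2.1]; rfl

lemma remaining_succ (he : IsTableau m l θ e) (k : ℕ) :
    remaining e (k + 1) = remaining e k \ {e (k + 1)} := by
  ext z
  constructor
  · rintro ⟨j, hj, rfl⟩
    refine ⟨⟨j, by omega, rfl⟩, fun h => ?_⟩
    have := he.1 (show 1 ≤ j by omega) (show 1 ≤ k + 1 by omega) h
    omega
  · rintro ⟨⟨j, hj, rfl⟩, hne⟩
    refine ⟨j, ?_, rfl⟩
    rcases (show k + 1 ≤ j from hj).lt_or_eq with h | h
    · exact h
    · exact absurd (by rw [h]; rfl) hne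

lemma remaining_up (hθ : IsCylindric m l θ) (he : IsTableau m l θ e) (k : ℕ) :
    ∀ x ∈ remaining e k, ∀ y, cle m l x y → y ∈ remaining e k := by
  rintro _ ⟨j, hj, rfl⟩ y hy
  have hx : e j ∈ θ := by rw [← he.2.1]; exact ⟨j, show 1 ≤ j by omega, rfl⟩
  have hyθ := hθ.2.2 _ hx y hy
  rw [← he.2.1] at hyθ
  obtain ⟨j', hj', rfl⟩ := hyθ
  by_cases h : e j = e j'
  · exact ⟨j, hj, h⟩
  · have := he.2.2 j j' (by omega) hj' hy h
    exact ⟨j', by omega, rfl⟩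

lemma remaining_min (he : IsTableau m l θ e) (k : ℕ) {z : Cyl m l}
    (hz : cle m l z (e (k + 1))) (hne : z ≠ e (k + 1)) : z ∉ remaining e k := by
  rintro ⟨j, hj, rfl⟩
  have := he.2.2 j (k + 1) (by omega) (by omega) hz hne
  omega

lemma tabWord_succ (k : ℕ) : tabWord m l e (k + 1) = tabWord m l e k ++ [con m l (e (k + 1))] := by
  simp [tabWord, List.range_succ]

/-- If the values of `φ` on simple roots are the second differences of the boundary path of `θ`,
the same relation persists between `φ ∘ w[k]` and the diagram left after removing `k` cells, and
each removal raises the value at `ρ` by exactly one. -/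
lemma tableau_invariant (hm : 1 ≤ m) (hl : 1 ≤ l) (hθ : IsCylindric m l θ)
    (he : IsTableau m l θ e) {a₀ : ℤ → ℤ} (ha₀ : IsBoundary θ a₀)
    (φ : Hw (m + l) →ₗ[ℚ] ℚ)
    (hφ : ∀ c : ℤ, φ (alphaR (m + l) (c : ZMod (m + l))) =
      ((a₀ (c - 1) - 2 * a₀ c + a₀ (c + 1) : ℤ) : ℚ)) (k : ℕ) :
    ∃ a : ℤ → ℤ, IsBoundary (remaining e k) a ∧
      (∀ c : ℤ, φ (wordProd (m + l) (tabWord m l e k) (alphaR (m + l) (c : ZMod (m + l)))) =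
        ((a (c - 1) - 2 * a c + a (c + 1) : ℤ) : ℚ)) ∧
      φ (wordProd (m + l) (tabWord m l e k) (rhoR (m + l))) = φ (rhoR (m + l)) + k := by
  have : NeZero (m + l) := ⟨by omega⟩
  induction k with
  | zero => exact ⟨a₀, by rwa [remaining_zero he], hφ, by simp [tabWord, wordProd]⟩
  | succ k ih =>
    obtain ⟨a, hb, hα, hρ⟩ := ih
    have hup := remaining_up hθ he k
    obtain ⟨p, q, hpq⟩ := exists_pr (e (k + 1))
    have h0 : pr m l (p, q) ∈ remaining e k := ⟨k + 1, by omega, hpq⟩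
    have h1 : pr m l (p + 1, q) ∉ remaining e k := by
      refine remaining_min he k (hpq ▸ cle_pr (by omega) le_rfl) ?_
      rw [hpq, Ne, pr_eq_iff]
      rintro ⟨t, e1, e2⟩
      have : t * (l : ℤ) = 0 := by linarith
      rcases mul_eq_zero.mp this with h | h
      · subst h; omega
      · omega
    have h2 : pr m l (p, q + 1) ∉ remaining e k := by
      refine remaining_min he k (hpq ▸ cle_pr le_rfl (by omega)) ?_
      rw [hpq, Ne, pr_eq_iff]
      rintro ⟨t, e1, e2⟩
      have : t * (m : ℤ) = 0 := by linarith
      rcases mul_eq_zero.mp this with h | h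
      · subst h; omega
      · omega
    obtain ⟨hp, hD⟩ := hb.corner hup h0 h1 h2
    have hrem := hb.remove (q - p)
    rw [hp, add_sub_cancel, ← hpq, ← remaining_succ he] at hrem
    obtain ⟨f, hf⟩ := exists_linear_wordProd (tabWord m l e k)
    have hi : con m l (e (k + 1)) = ((q - p : ℤ) : ZMod (m + l)) := by rw [hpq, con_pr]
    have hneg : φ (f (alphaR (m + l) ((q - p : ℤ) : ZMod (m + l)))) = -1 := by
      rw [hf, hα, hD]; norm_num
    have hstep : ∀ ζ, φ (wordProd (m + l) (tabWord m l e (k + 1)) ζ) =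
        φ (wordProd (m + l) (tabWord m l e k) ζ)
          + pairSimple (m + l) ζ ((q - p : ℤ) : ZMod (m + l)) := by
      intro ζ
      rw [tabWord_succ, wordProd_append, hi, ← hf, ← hf]
      have := functional_sFun (φ ∘ₗ f) ((q - p : ℤ) : ZMod (m + l)) ζ
      simp only [LinearMap.comp_apply, hneg] at this
      rw [show wordProd (m + l) [((q - p : ℤ) : ZMod (m + l))] ζ = sFun (m + l) _ ζ from rfl, this]
      ring
    refine ⟨_, hrem, ?_, ?_⟩
    · intro c
      rw [hstep, hα, pairSimple_alphaR, cartan_eq]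
      generalize ((q - p : ℤ) : ZMod (m + l)) = i
      have e1 : (((c - 1 : ℤ) : ZMod (m + l)) = i) ↔ ((c : ZMod (m + l)) = i + 1) := by
        push_cast
        constructor <;> intro h <;> linear_combination h
      have e2 : (((c + 1 : ℤ) : ZMod (m + l)) = i) ↔ ((c : ZMod (m + l)) = i - 1) := by
        push_cast
        constructor <;> intro h <;> linear_combination h
      simp only [e1, e2]
      push_cast
      ring
    · rw [hstep, hρ, pairSimple_rhoR]
      push_cast
      ring

/-- The functional whose values on simple roots are the second differences of a boundary path
is minuscule. -/
lemma exists_minuscule (hm : 1 ≤ m) {a : ℤ → ℤ} (ha : IsBoundary θ a)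
    (hup : ∀ x ∈ θ, ∀ y, cle m l x y → y ∈ θ) :
    ∃ φ : Hw (m + l) →ₗ[ℚ] ℚ, Minuscule φ ∧
      ∀ c : ℤ, φ (alphaR (m + l) (c : ZMod (m + l))) =
        ((a (c - 1) - 2 * a c + a (c + 1) : ℤ) : ℚ) := by
  have : NeZero (m + l) := ⟨by omega⟩
  obtain ⟨ε, hε⟩ : ∃ ε : ZMod (m + l) → ℚ, ∀ c : ℤ, ε c = ((a (c - 1) - a c : ℤ) : ℚ) := by
    refine ⟨fun j => ((a ((j.val : ℤ) - 1) - a (j.val : ℤ) : ℤ) : ℚ), fun c => ?_⟩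
    have := ha.periodic ((c : ZMod (m + l)).val : ℤ) c (by simp)
    exact congrArg (Int.cast : ℤ → ℚ) this
  let φ : Hw (m + l) →ₗ[ℚ] ℚ :=
    (∑ j, (ε j - ε (j + 1)) • LinearMap.proj j) ∘ₗ LinearMap.fst ℚ _ _
  have hφ : ∀ j, φ (alphaR (m + l) j) = ε j - ε (j + 1) := by
    intro j
    simp [φ, alphaR, Pi.single_apply]
  refine ⟨φ, ⟨ε, fun j => ?_, hφ⟩, fun c => ?_⟩
  · obtain ⟨c, rfl⟩ := ZMod.intCast_surjective j
    rw [hε]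
    have := ha.step hup (c - 1)
    rw [sub_add_cancel] at this
    rcases this with h | h
    · left; rw [h]; simp
    · right; rw [h]; simp
  · rw [hφ, hε, show (c : ZMod (m + l)) + 1 = ((c + 1 : ℤ) : ZMod (m + l)) by push_cast; rfl, hε,
      add_sub_cancel_right]
    push_cast
    ring

end Tableau

/-- Proposition 2.10: the expression w_{θ,T}[n] = s(T⁻¹(1)) ⋯ s(T⁻¹(n)) is reduced. -/
theorem statement_7 (m l : ℕ) (hm : 1 ≤ m) (hl : 1 ≤ l)
    (θ : Set (Cyl m l)) (hθ : IsCylindric m l θ)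
    (e : ℕ → Cyl m l) (he : IsTableau m l θ e) (n : ℕ) (hn : 1 ≤ n) :
    len (m + l) (wordProd (m + l) (tabWord m l e n)) = n := by
  have : NeZero (m + l) := ⟨by omega⟩
  obtain ⟨a, ha⟩ := exists_boundary hθ
  obtain ⟨φ, hmin, hφ⟩ := exists_minuscule hm ha hθ.2.2
  obtain ⟨-, -, -, hρ⟩ := tableau_invariant hm hl hθ he ha φ hφ n
  have hmem : n ∈ {r : ℕ | ∃ L : List (ZMod (m + l)), L.length = r ∧
      wordProd (m + l) L = wordProd (m + l) (tabWord m l e n)} :=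
    ⟨tabWord m l e n, by simp [tabWord], rfl⟩
  refine le_antisymm (Nat.sInf_le hmem) (le_csInf ⟨n, hmem⟩ ?_)
  rintro r ⟨L, rfl, hL⟩
  have hle := hmin.abs_wordProd_le (by omega) L
  rw [hL, hρ, add_sub_cancel_left] at hle
  exact_mod_cast (le_abs_self _).trans hle

end CylPaper
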